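/- There exist real constants C > 0 and c > 0 and a natural number N such that for every n ≥ N the following holds. Let G = Sym(n) be the symmetric group on n letters, let K = (G × G) ⋊ Z₂ with the nontrivial element of Z₂ acting by the swap automorphism, and let M be the conjugacy class in K of the element ((1,1),1), so M = {((α,α⁻¹),1) : α ∈ G}, a conjugacy class of involutions. Let k be a natural number with 1 ≤ k ≤ C·n·log₂(n), let (ρ_i)_{i∈T} be any complete family of irreducibles for K^k, with ρ_i acting on V_i of dimension d_i, and for each i let B_i be any orthonormal basis of V_i. For m ∈ M put Π_m^{(i)} = 2^{-k} Σ_{I ⊆ {1,…,k}} ρ_i(m^I), define H_m(i) = 2^k · d_i · rank(Π_m^{(i)}) / |K|^k (a probability distribution on T for each m), define H_m(i,b) = ‖Π_m^{(i)} b‖² / rank(Π_m^{(i)}) for b ∈ B_i (with the convention x/0 = 0), and let D_m(i) = Σ_{b∈B_i} | H_m(i,b) − 1/d_i |. Then (1/|M|) Σ_{m∈M} Σ_{i∈T with D_m(i) > n^{−c·n}} H_m(i) ≤ n^{−c·n}. -/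

import Mathlib

/-
For a unit vector `b`, the number `2^k ‖Π_m b‖² - 1` is the sum over `I ≠ ∅` of the matrix
coefficients `⟪b, ρ_i(m^I) b⟫`. Hence the deviation of `H_m(i, ·)` from uniform, averaged over `m`
and `i`, is at most `2 · 2^k` times the mean size of one such coefficient, with `i` drawn from the
Plancherel measure of `K^k` and `b` uniformly from `B_i`. Put `m_α = ((α, α⁻¹), 1)`. Then
`m_α m_β = ((αβ⁻¹, α⁻¹β), 0)`, and Cauchy–Schwarz in `V ⊗ V` reduces the coefficients at the `m_α`
to those on `G × G`. Averaging the latter over conjugation, Bessel's inequality for the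
Schur-orthogonal matrix coefficients bounds their second moment by a count of commuting pairs, that
is, by the number of conjugacy classes. The mean size is therefore at most `(p² / |G|)^(1/8)`, where
`p` is the number of conjugacy classes of `G`. For `Sym(n)` one has `p ≤ 2^n` while `n!` grows like
`n^(n - o(n))`, which beats `2^k` for `k ≤ n log₂ n / 128`, and Markov's inequality concludes.
-/

noncomputable section

open scoped BigOperators InnerProductSpace

def IsUnitaryRep {G V : Type*} [Group G] [NormedAddCommGroup V] [InnerProductSpace ℂ V]
    (ρ : Representation ℂ G V) : Prop :=
  ∀ (g : G) (v w : V), ⟪ρ g v, ρ g w⟫_ℂ = ⟪v, w⟫_ℂ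

def IsIrreducibleRep {G V : Type*} [Group G] [AddCommGroup V] [Module ℂ V]
    (ρ : Representation ℂ G V) : Prop :=
  (∃ v : V, v ≠ 0) ∧
    ∀ W : Submodule ℂ V, (∀ (g : G) (v : V), v ∈ W → ρ g v ∈ W) → W = ⊥ ∨ W = ⊤

def RepIso {G V₁ V₂ : Type*} [Group G] [AddCommGroup V₁] [Module ℂ V₁]
    [AddCommGroup V₂] [Module ℂ V₂]
    (ρ₁ : Representation ℂ G V₁) (ρ₂ : Representation ℂ G V₂) : Prop :=
  ∃ e : V₁ ≃ₗ[ℂ] V₂, ∀ (g : G) (v : V₁), e (ρ₁ g v) = ρ₂ g (e v)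

def repChar {G V : Type*} [Group G] [AddCommGroup V] [Module ℂ V]
    (ρ : Representation ℂ G V) (g : G) : ℂ := LinearMap.trace ℂ V (ρ g)

def IsCompleteFamily {G : Type*} [Group G] {J : Type*}
    (W : J → Type*) [∀ j, NormedAddCommGroup (W j)] [∀ j, InnerProductSpace ℂ (W j)]
    [∀ j, FiniteDimensional ℂ (W j)]
    (σ : ∀ j, Representation ℂ G (W j)) : Prop :=
  (∀ j, IsUnitaryRep (σ j)) ∧ (∀ j, IsIrreducibleRep (σ j)) ∧
    (∀ j j', j ≠ j' → ¬ RepIso (σ j) (σ j')) ∧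
    (∀ (U : Type) [AddCommGroup U] [Module ℂ U] [FiniteDimensional ℂ U]
      (τ : Representation ℂ G U), IsIrreducibleRep τ → ∃ j, RepIso τ (σ j))

def isoProj {G V : Type*} [Group G] [Fintype G] [AddCommGroup V] [Module ℂ V]
    (d : ℕ) (χ : G → ℂ) (ρ : Representation ℂ G V) : V →ₗ[ℂ] V :=
  ((d : ℂ) / (Fintype.card G : ℂ)) • ∑ g : G, starRingEnd ℂ (χ g) • (ρ g : V →ₗ[ℂ] V)

def onI {G : Type*} [One G] {k : ℕ} (g : G) (I : Finset (Fin k)) : Fin k → G :=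
  fun i => if i ∈ I then g else 1

def invProj {G V : Type*} [Group G] [AddCommGroup V] [Module ℂ V] {k : ℕ}
    (ρ : Representation ℂ (Fin k → G) V) (m : G) : V →ₗ[ℂ] V :=
  ((2 : ℂ) ^ k)⁻¹ • ∑ I : Finset (Fin k), (ρ (onI m I) : V →ₗ[ℂ] V)

def isoProjI {G V : Type*} [Group G] [Fintype G] [AddCommGroup V] [Module ℂ V] {k : ℕ}
    (ρ : Representation ℂ (Fin k → G) V) (d : ℕ) (χ : G → ℂ) (I : Finset (Fin k)) :
    V →ₗ[ℂ] V :=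
  ((d : ℂ) / (Fintype.card G : ℂ)) • ∑ g : G, starRingEnd ℂ (χ g) • (ρ (onI g I) : V →ₗ[ℂ] V)
noncomputable section

open scoped BigOperators InnerProductSpace

/-- The swap automorphism of `G × G`. -/
def swapAut (G : Type*) [Group G] : MulAut (G × G) := (MulEquiv.prodComm : (G × G) ≃* (G × G))

lemma swapAut_sq (G : Type*) [Group G] : swapAut G * swapAut G = 1 := by
  ext p <;> simp [swapAut, MulAut.mul_apply]

/-- The homomorphism `Z₂ → Aut(G × G)` sending the nontrivial element to the swap. -/
def swapHom (G : Type*) [Group G] : Multiplicative (ZMod 2) →* MulAut (G × G) where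
  toFun t := swapAut G ^ (t.toAdd.val)
  map_one' := by
    show swapAut G ^ ((0 : ZMod 2)).val = 1
    simp
  map_mul' a b := by
    have h2 : ∀ x : ZMod 2, x = 0 ∨ x = 1 := by decide
    have key : ∀ x y : ZMod 2,
        swapAut G ^ (x + y).val = swapAut G ^ x.val * swapAut G ^ y.val := by
      intro x y
      have v00 : ((0 : ZMod 2) + 0).val = 0 := by decide
      have v01 : ((0 : ZMod 2) + 1).val = 1 := by decide
      have v10 : ((1 : ZMod 2) + 0).val = 1 := by decide
      have v11 : ((1 : ZMod 2) + 1).val = 0 := by decide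
      have v0 : (0 : ZMod 2).val = 0 := by decide
      have v1 : (1 : ZMod 2).val = 1 := by decide
      rcases h2 x with hx | hx <;> rcases h2 y with hy | hy <;> subst hx <;> subst hy <;>
        simp [v00, v01, v10, v11, v0, v1, swapAut_sq G]
    exact key a.toAdd b.toAdd

/-- `K = (G × G) ⋊ Z₂`, with `Z₂` acting by the swap automorphism. -/
abbrev wreathZ2 (G : Type*) [Group G] : Type _ :=
  SemidirectProduct (G × G) (Multiplicative (ZMod 2)) (swapHom G)

instance (G : Type*) [Group G] [Fintype G] : Fintype (wreathZ2 G) :=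
  Fintype.ofEquiv ((G × G) × Multiplicative (ZMod 2))
    { toFun := fun p => ⟨p.1, p.2⟩
      invFun := fun x => (x.left, x.right)
      left_inv := fun _ => rfl
      right_inv := fun _ => rfl }


open Classical in
/-- The conjugacy class `M = {((α,α⁻¹),1) : α ∈ G}` of `((1,1),1)` in `K = (G × G) ⋊ Z₂`. -/
def classM (G : Type*) [Group G] [Fintype G] : Finset (wreathZ2 G) :=
  Finset.univ.image (fun α : G => (⟨(α, α⁻¹), Multiplicative.ofAdd 1⟩ : wreathZ2 G))

section UnitaryRepresentations

variable {G V W : Type*} [Group G] [NormedAddCommGroup V] [InnerProductSpace ℂ V]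
  [NormedAddCommGroup W] [InnerProductSpace ℂ W]
  {ρ : Representation ℂ G V} {σ : Representation ℂ G W}

lemma IsUnitaryRep.inner_map_inv (hρ : IsUnitaryRep ρ) (g : G) (v w : V) :
    ⟪v, ρ g⁻¹ w⟫_ℂ = ⟪ρ g v, w⟫_ℂ := by
  rw [← hρ g v (ρ g⁻¹ w), ρ.self_inv_apply]

lemma IsUnitaryRep.norm_map (hρ : IsUnitaryRep ρ) (g : G) (v : V) : ‖ρ g v‖ = ‖v‖ := by
  rw [norm_eq_sqrt_re_inner (𝕜 := ℂ), hρ, ← norm_eq_sqrt_re_inner]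

lemma IsUnitaryRep.norm_inner_map_le_one (hρ : IsUnitaryRep ρ) (g : G) {v : V} (hv : ‖v‖ = 1) :
    ‖⟪v, ρ g v⟫_ℂ‖ ≤ 1 := by
  simpa only [hρ.norm_map, hv, one_mul] using norm_inner_le_norm (𝕜 := ℂ) v (ρ g v)

end UnitaryRepresentations

section Schur

lemma IsIrreducibleRep.nontrivial {G V : Type*} [Group G] [AddCommGroup V] [Module ℂ V]
    {ρ : Representation ℂ G V} (hρ : IsIrreducibleRep ρ) : Nontrivial V :=
  let ⟨v, hv⟩ := hρ.1
  ⟨v, 0, hv⟩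

lemma IsIrreducibleRep.isIrreducible {G V : Type*} [Group G] [AddCommGroup V] [Module ℂ V]
    {ρ : Representation ℂ G V} (hρ : IsIrreducibleRep ρ) : ρ.IsIrreducible where
  exists_pair_ne := by
    have := hρ.nontrivial
    exact ⟨⊥, ⊤, fun h => bot_ne_top (congrArg Subrepresentation.toSubmodule h)⟩
  eq_bot_or_eq_top U :=
    (hρ.2 U.toSubmodule fun g _ hv => U.apply_mem_toSubmodule g hv).imp
      (fun h => Subrepresentation.toSubmodule_injective h)
      (fun h => Subrepresentation.toSubmodule_injective h)

variable {G V W : Type*} [Group G] [Fintype G]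

/-- The sum of the conjugates `ρ g ∘ X ∘ σ g⁻¹` of a linear map `X`, as an intertwining map. -/
def conjSum [AddCommGroup V] [Module ℂ V] [AddCommGroup W] [Module ℂ W]
    (σ : Representation ℂ G W) (ρ : Representation ℂ G V) (X : W →ₗ[ℂ] V) :
    σ.IntertwiningMap ρ where
  toLinearMap := ∑ g, ρ g ∘ₗ X ∘ₗ σ g⁻¹
  isIntertwining' h := by
    refine LinearMap.ext fun w => ?_
    simp only [LinearMap.comp_apply, LinearMap.sum_apply, map_sum]
    refine Fintype.sum_equiv (Equiv.mulLeft h⁻¹) _ _ fun g => ?_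
    simp [map_mul]

lemma trace_conjSum [AddCommGroup V] [Module ℂ V] [FiniteDimensional ℂ V]
    (ρ : Representation ℂ G V) (X : V →ₗ[ℂ] V) :
    LinearMap.trace ℂ V (conjSum ρ ρ X).toLinearMap =
      Fintype.card G * LinearMap.trace ℂ V X := by
  have trace_conj (g : G) : LinearMap.trace ℂ V (ρ g ∘ₗ X ∘ₗ ρ g⁻¹) = LinearMap.trace ℂ V X := by
    rw [LinearMap.trace_comp_comm', LinearMap.comp_assoc, ← Module.End.mul_eq_comp (ρ g⁻¹),
      ← map_mul, inv_mul_cancel, map_one, Module.End.one_eq_id, LinearMap.comp_id]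
  simp [conjSum, trace_conj]

variable [NormedAddCommGroup V] [InnerProductSpace ℂ V] [NormedAddCommGroup W]
  [InnerProductSpace ℂ W] {ρ : Representation ℂ G V} {σ : Representation ℂ G W}

/-- The matrix coefficient `g ↦ ⟪a, ρ g b⟫` as a vector of `ℓ²(G)`. -/
def matCoef (ρ : Representation ℂ G V) (a b : V) : EuclideanSpace ℂ G :=
  WithLp.toLp 2 fun g => ⟪a, ρ g b⟫_ℂ

lemma inner_matCoef_eq_inner_conjSum (hσ : IsUnitaryRep σ) (a b : W) (c e : V) :
    ⟪matCoef σ a b, matCoef ρ c e⟫_ℂ = ⟪c, conjSum σ ρ ((innerₛₗ ℂ b).smulRight e) a⟫_ℂ := by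
  simp [conjSum, matCoef, PiLp.inner_apply, hσ.inner_map_inv, mul_comm]

lemma inner_matCoef_of_not_repIso (hσ : IsUnitaryRep σ) (hσi : IsIrreducibleRep σ)
    (hρi : IsIrreducibleRep ρ) (hne : ¬ RepIso σ ρ) (a b : W) (c e : V) :
    ⟪matCoef σ a b, matCoef ρ c e⟫_ℂ = 0 := by
  have := hσi.isIrreducible
  have := hρi.isIrreducible
  have : IsEmpty (σ.Equiv ρ) :=
    ⟨fun f => hne ⟨f.toLinearEquiv, fun g v => f.toIntertwiningMap.isIntertwining σ ρ g v⟩⟩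
  rw [inner_matCoef_eq_inner_conjSum hσ, Subsingleton.elim (conjSum σ ρ _) 0]
  simp

lemma inner_matCoef_self [FiniteDimensional ℂ V] (hρ : IsUnitaryRep ρ) (hρi : IsIrreducibleRep ρ)
    (a b c e : V) :
    ⟪matCoef ρ a b, matCoef ρ c e⟫_ℂ =
      Fintype.card G / Module.finrank ℂ V * (⟪b, e⟫_ℂ * ⟪c, a⟫_ℂ) := by
  have := hρi.nontrivial
  have := hρi.isIrreducible
  set X := (innerₛₗ ℂ b).smulRight e
  obtain ⟨t, ht⟩ :=
    Representation.IsIrreducible.algebraMap_intertwiningMap_bijective_of_isAlgClosed.2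
      (conjSum ρ ρ X)
  have conjSum_eq : (conjSum ρ ρ X).toLinearMap = t • LinearMap.id := by
    rw [← ht]
    rfl
  have trace_eq : t * Module.finrank ℂ V = Fintype.card G * ⟪b, e⟫_ℂ := by
    have trace_X : LinearMap.trace ℂ V X = ⟪b, e⟫_ℂ := LinearMap.trace_smulRight _ _
    simpa only [conjSum_eq, map_smul, LinearMap.trace_id, smul_eq_mul, trace_X] using
      trace_conjSum ρ X
  have finrank_ne_zero : (Module.finrank ℂ V : ℂ) ≠ 0 := by
    exact_mod_cast (Module.finrank_pos (R := ℂ) (M := V)).ne'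
  calc ⟪matCoef ρ a b, matCoef ρ c e⟫_ℂ = ⟪c, (conjSum ρ ρ X).toLinearMap a⟫_ℂ :=
        inner_matCoef_eq_inner_conjSum hρ a b c e
    _ = t * ⟪c, a⟫_ℂ := by
        rw [conjSum_eq, LinearMap.smul_apply, inner_smul_right, LinearMap.id_apply]
    _ = _ := by rw [eq_div_of_mul_eq finrank_ne_zero trace_eq]; ring

end Schur

section Collisions

variable {S α β : Type*}

/-- The number of pairs `(s, t)` with `c s = c t`, that is, the squared `ℓ²` norm of the image
under `c` of the counting measure. -/
def collisionCount (c : S → α) : ℕ := Nat.card {p : S × S // c p.1 = c p.2}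

lemma collisionCount_comp_equiv (c : α → β) (e : S ≃ α) :
    collisionCount (c ∘ e) = collisionCount c :=
  Nat.card_congr ((e.prodCongr e).subtypeEquiv fun _ => Iff.rfl)

lemma collisionCount_comp_injective {f : α → β} (hf : f.Injective) (c : S → α) :
    collisionCount (f ∘ c) = collisionCount c := by
  simp only [collisionCount, Function.comp_apply, hf.eq_iff]

variable [Fintype S] [Fintype α]

open Classical in
/-- The image under `c` of the counting measure, as a vector of `ℓ²(α)`. -/
def countVector (c : S → α) : EuclideanSpace ℂ α := ∑ s, EuclideanSpace.single (c s) 1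

lemma inner_countVector (c : S → α) (x : EuclideanSpace ℂ α) :
    ⟪countVector c, x⟫_ℂ = ∑ s, x (c s) := by
  simp [countVector, EuclideanSpace.inner_single_left]

lemma norm_countVector_sq (c : S → α) : ‖countVector c‖ ^ 2 = collisionCount c := by
  classical
  have inner_self : ⟪countVector c, countVector c⟫_ℂ = collisionCount c := by
    rw [inner_countVector]
    simp only [countVector, WithLp.ofLp_sum, Finset.sum_apply, PiLp.single_apply, collisionCount,
      Nat.card_eq_fintype_card, Fintype.card_subtype, Finset.card_filter, Nat.cast_sum,
      Nat.cast_ite, Nat.cast_one, Nat.cast_zero, Fintype.sum_prod_type]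
  rw [inner_self_eq_norm_sq_to_K] at inner_self
  exact Complex.ofReal_injective (by simpa using inner_self)

lemma sq_sum_comp_le_collisionCount_mul (c : S → α) {F : α → ℝ} (F_nonneg : ∀ a, 0 ≤ F a)
    (F_le_one : ∀ a, F a ≤ 1) : (∑ s, F (c s)) ^ 2 ≤ collisionCount c * ∑ a, F a := by
  set x : EuclideanSpace ℂ α := WithLp.toLp 2 fun a => (F a : ℂ) with hx
  have inner_eq : ⟪countVector c, x⟫_ℂ = (∑ s, F (c s) : ℝ) := by
    rw [inner_countVector]
    push_cast
    rfl
  have norm_sq_le : ‖x‖ ^ 2 ≤ ∑ a, F a := by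
    rw [EuclideanSpace.norm_sq_eq]
    refine Finset.sum_le_sum fun a _ => ?_
    simpa [hx] using pow_le_of_le_one (F_nonneg a) (F_le_one a) two_ne_zero
  calc (∑ s, F (c s)) ^ 2 = ‖⟪countVector c, x⟫_ℂ‖ ^ 2 := by
        rw [inner_eq, Complex.norm_real, Real.norm_eq_abs, sq_abs]
    _ ≤ (‖countVector c‖ * ‖x‖) ^ 2 := by gcongr; exact norm_inner_le_norm _ _
    _ ≤ collisionCount c * ∑ a, F a := by
        rw [mul_pow, norm_countVector_sq]
        gcongr

end Collisions

section Plancherel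

/-- A family of pairwise non-isomorphic irreducible unitary representations. -/
structure IsInequivalentFamily {G T : Type*} [Group G] {V : T → Type*}
    [∀ i, NormedAddCommGroup (V i)] [∀ i, InnerProductSpace ℂ (V i)]
    (ρ : ∀ i, Representation ℂ G (V i)) : Prop where
  isUnitaryRep : ∀ i, IsUnitaryRep (ρ i)
  isIrreducibleRep : ∀ i, IsIrreducibleRep (ρ i)
  not_repIso : Pairwise fun i j => ¬ RepIso (ρ i) (ρ j)

variable {G T : Type*} {V : T → Type*} [∀ i, NormedAddCommGroup (V i)]
  [∀ i, InnerProductSpace ℂ (V i)] {ι : T → Type*}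

lemma IsCompleteFamily.isInequivalentFamily [Group G] [∀ i, FiniteDimensional ℂ (V i)]
    {ρ : ∀ i, Representation ℂ G (V i)} (hρ : IsCompleteFamily V ρ) : IsInequivalentFamily ρ :=
  ⟨hρ.1, hρ.2.1, fun i j => hρ.2.2.1 i j⟩

variable (G V) in
/-- The mean of `f` over an irreducible representation drawn from the Plancherel measure (with
probability `d_i² / |G|`) and a uniformly random vector of its basis. -/
def plancherelMean [Fintype G] [Fintype T] [∀ i, Fintype (ι i)] (f : (Σ i, ι i) → ℝ) : ℝ :=
  ∑ j, Module.finrank ℂ (V j.1) / Fintype.card G * f j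

section PlancherelMean

variable [Fintype G] [Fintype T] [∀ i, Fintype (ι i)]

lemma plancherelMean_eq_sum (f : (Σ i, ι i) → ℝ) : plancherelMean G V f =
    ∑ i, Module.finrank ℂ (V i) / Fintype.card G * ∑ x, f ⟨i, x⟩ := by
  simp only [plancherelMean, Fintype.sum_sigma, Finset.mul_sum]

lemma plancherelMean_mono {f g : (Σ i, ι i) → ℝ} (h : ∀ j, f j ≤ g j) :
    plancherelMean G V f ≤ plancherelMean G V g := by
  unfold plancherelMean
  gcongr with j
  exact h j

lemma plancherelMean_nonneg {f : (Σ i, ι i) → ℝ} (hf : ∀ j, 0 ≤ f j) :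
    0 ≤ plancherelMean G V f :=
  Finset.sum_nonneg fun j _ => mul_nonneg (by positivity) (hf j)

lemma plancherelMean_const_mul (a : ℝ) (f : (Σ i, ι i) → ℝ) :
    plancherelMean G V (fun j => a * f j) = a * plancherelMean G V f := by
  simp only [plancherelMean, Finset.mul_sum, mul_left_comm]

lemma plancherelMean_sum {Y : Type*} (s : Finset Y) (f : Y → (Σ i, ι i) → ℝ) :
    plancherelMean G V (fun j => ∑ y ∈ s, f y j) = ∑ y ∈ s, plancherelMean G V (f y) := by
  simp only [plancherelMean, Finset.mul_sum]
  exact Finset.sum_comm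

end PlancherelMean

variable [Group G] [Fintype G] [∀ i, FiniteDimensional ℂ (V i)] [∀ i, Fintype (ι i)]
  {ρ : ∀ i, Representation ℂ G (V i)}

lemma IsInequivalentFamily.orthonormal_matCoef (hρ : IsInequivalentFamily ρ)
    (B : ∀ i, OrthonormalBasis (ι i) ℂ (V i)) :
    Orthonormal ℂ fun p : Σ i, ι i × ι i =>
      (√(Module.finrank ℂ (V p.1) / Fintype.card G) : ℂ) •
        matCoef (ρ p.1) (B p.1 p.2.1) (B p.1 p.2.2) := by
  classical
  rw [orthonormal_iff_ite]
  rintro ⟨i, a, b⟩ ⟨j, c, e⟩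
  rw [inner_smul_left, inner_smul_right, Complex.conj_ofReal]
  rcases eq_or_ne i j with rfl | hij
  · have := (hρ.isIrreducibleRep i).nontrivial
    have finrank_ne_zero : (Module.finrank ℂ (V i) : ℂ) ≠ 0 := by
      exact_mod_cast (Module.finrank_pos (R := ℂ) (M := V i)).ne'
    have card_ne_zero : (Fintype.card G : ℂ) ≠ 0 := by exact_mod_cast Fintype.card_ne_zero
    rw [← mul_assoc, ← Complex.ofReal_mul, Real.mul_self_sqrt (by positivity),
      inner_matCoef_self (hρ.isUnitaryRep i) (hρ.isIrreducibleRep i),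
      orthonormal_iff_ite.mp (B i).orthonormal, orthonormal_iff_ite.mp (B i).orthonormal,
      ← mul_assoc]
    push_cast
    rw [div_mul_div_cancel₀ card_ne_zero, div_self finrank_ne_zero]
    by_cases hac : a = c <;> by_cases hbe : b = e <;> simp [hac, hbe, eq_comm (a := c)]
  · rw [inner_matCoef_of_not_repIso (hρ.isUnitaryRep i) (hρ.isIrreducibleRep i)
      (hρ.isIrreducibleRep j) (hρ.not_repIso hij), mul_zero, mul_zero, if_neg]
    exact fun h => hij (congrArg Sigma.fst h)

variable [Fintype T]

lemma IsInequivalentFamily.plancherelMean_norm_sq_le {S : Type*} [Fintype S]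
    (hρ : IsInequivalentFamily ρ) (B : ∀ i, OrthonormalBasis (ι i) ℂ (V i)) (c : S → G) :
    plancherelMean G V (fun j => ‖∑ s, ρ j.1 (c s) (B j.1 j.2)‖ ^ 2) ≤ collisionCount c := by
  have inner_matCoef (i : T) (a b : ι i) : ⟪countVector c, matCoef (ρ i) (B i a) (B i b)⟫_ℂ =
      ⟪B i a, ∑ s, ρ i (c s) (B i b)⟫_ℂ := by
    rw [inner_countVector, inner_sum]
    rfl
  have parseval (i : T) (v : V i) :
      ∑ a, ‖(√(Module.finrank ℂ (V i) / Fintype.card G) : ℂ) * ⟪B i a, v⟫_ℂ‖ ^ 2 =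
        Module.finrank ℂ (V i) / Fintype.card G * ‖v‖ ^ 2 := by
    simp only [norm_mul, mul_pow, Complex.norm_real, Real.norm_eq_abs, sq_abs]
    rw [← Finset.mul_sum, OrthonormalBasis.sum_sq_norm_inner_right, Real.sq_sqrt (by positivity)]
  have bessel := (hρ.orthonormal_matCoef B).sum_inner_products_le (countVector c)
    (s := Finset.univ)
  simp_rw [norm_inner_symm _ (countVector c), inner_smul_right, inner_matCoef,
    norm_countVector_sq, Fintype.sum_sigma, Fintype.sum_prod_type_right] at bessel
  simp only [plancherelMean, Fintype.sum_sigma]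
  exact (Finset.sum_congr rfl fun i _ => Finset.sum_congr rfl fun b _ =>
    (parseval i _).symm).trans_le bessel

lemma IsInequivalentFamily.plancherelMean_one_le (hρ : IsInequivalentFamily ρ)
    (B : ∀ i, OrthonormalBasis (ι i) ℂ (V i)) :
    plancherelMean G V (fun _ : Σ i, ι i => 1) ≤ 1 := by
  simpa [collisionCount] using hρ.plancherelMean_norm_sq_le B fun _ : Unit => 1

lemma IsInequivalentFamily.sq_plancherelMean_le (hρ : IsInequivalentFamily ρ)
    (B : ∀ i, OrthonormalBasis (ι i) ℂ (V i)) (f : (Σ i, ι i) → ℝ) :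
    plancherelMean G V f ^ 2 ≤ plancherelMean G V fun j => f j ^ 2 := by
  have weight_nonneg (j : Σ i, ι i) : (0 : ℝ) ≤ Module.finrank ℂ (V j.1) / Fintype.card G := by
    positivity
  have cauchy_schwarz : plancherelMean G V f ^ 2 ≤
      plancherelMean G V (fun _ : Σ i, ι i => 1) * plancherelMean G V fun j => f j ^ 2 :=
    Finset.sum_sq_le_sum_mul_sum_of_sq_le_mul _
      (fun j _ => mul_nonneg (weight_nonneg j) zero_le_one)
      (fun j _ => mul_nonneg (weight_nonneg j) (sq_nonneg _)) (fun j _ => by ring_nf; rfl)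
  exact cauchy_schwarz.trans (mul_le_of_le_one_left
    (plancherelMean_nonneg fun j => sq_nonneg _) (hρ.plancherelMean_one_le B))

end Plancherel

section TensorSquare

open scoped TensorProduct

variable {G S V : Type*} [Group G] [Fintype S] [NormedAddCommGroup V] [InnerProductSpace ℂ V]
  {ρ : Representation ℂ G V}

lemma sq_norm_inner_le_norm_inner_self {E : Type*} [NormedAddCommGroup E] [InnerProductSpace ℂ E]
    {v : E} (hv : ‖v‖ = 1) (w : E) : ‖⟪v, w⟫_ℂ‖ ^ 2 ≤ ‖⟪w, w⟫_ℂ‖ := by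
  simpa [inner_self_eq_norm_sq_to_K, hv] using
    pow_le_pow_left₀ (norm_nonneg _) (norm_inner_le_norm (𝕜 := ℂ) v w) 2

-- `|⟪b, ρ g b⟫|²` is the coefficient of `ρ g ⊗ ρ g⁻¹` at `b ⊗ b`, so Cauchy–Schwarz in `V ⊗ V`
-- applies to the sum of these operators.
lemma IsUnitaryRep.sq_sum_norm_inner_sq_le (hρ : IsUnitaryRep ρ) (c : S → G) {b : V}
    (hb : ‖b‖ = 1) :
    (∑ s, ‖⟪b, ρ (c s) b⟫_ℂ‖ ^ 2) ^ 2 ≤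
      ‖∑ s, ∑ t, ⟪b, ρ ((c s)⁻¹ * c t) b⟫_ℂ * ⟪b, ρ (c s * (c t)⁻¹) b⟫_ℂ‖ := by
  set T : V ⊗[ℂ] V := ∑ s, ρ (c s) b ⊗ₜ ρ (c s)⁻¹ b with hT
  have inner_T : ⟪b ⊗ₜ b, T⟫_ℂ = (∑ s, ‖⟪b, ρ (c s) b⟫_ℂ‖ ^ 2 : ℝ) := by
    simp only [hT, inner_sum, TensorProduct.inner_tmul, hρ.inner_map_inv]
    push_cast
    refine Finset.sum_congr rfl fun s _ => ?_
    rw [← inner_conj_symm (ρ (c s) b) b, RCLike.mul_conj]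
    rfl
  have inner_T_T : ⟪T, T⟫_ℂ =
      ∑ s, ∑ t, ⟪b, ρ ((c s)⁻¹ * c t) b⟫_ℂ * ⟪b, ρ (c s * (c t)⁻¹) b⟫_ℂ := by
    rw [hT, sum_inner]
    simp only [inner_sum, TensorProduct.inner_tmul]
    refine Finset.sum_congr rfl fun s _ => Finset.sum_congr rfl fun t _ => ?_
    rw [map_mul, map_mul, Module.End.mul_apply, Module.End.mul_apply,
      hρ.inner_map_inv (c s) b (ρ (c t) b), ← hρ.inner_map_inv (c s)⁻¹ b (ρ (c t)⁻¹ b), inv_inv]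
  have norm_tmul_self : ‖b ⊗ₜ[ℂ] b‖ = 1 := by rw [TensorProduct.norm_tmul, hb, one_mul]
  have key := sq_norm_inner_le_norm_inner_self norm_tmul_self T
  rwa [inner_T, inner_T_T, Complex.norm_real, Real.norm_eq_abs, sq_abs] at key

lemma IsUnitaryRep.sq_sum_norm_inner_sq_le_of_inv_eq (hρ : IsUnitaryRep ρ) {c : S → G}
    (hc : ∀ s, (c s)⁻¹ = c s) {b : V} (hb : ‖b‖ = 1) :
    (∑ s, ‖⟪b, ρ (c s) b⟫_ℂ‖ ^ 2) ^ 2 ≤ ∑ s, ∑ t, ‖⟪b, ρ ((c s)⁻¹ * c t) b⟫_ℂ‖ ^ 2 := by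
  refine (hρ.sq_sum_norm_inner_sq_le c hb).trans (norm_sum_le_of_le _ fun s _ =>
    norm_sum_le_of_le _ fun t _ => ?_)
  rw [hc t, hc s, norm_mul, sq]

variable [Fintype G]

-- `g ↦ ∑ x, φ (x g x⁻¹)` is a class function, so `φ` may be averaged over conjugation.
lemma card_mul_sum_mul_conj_sum_conj (φ : G → ℂ) :
    (Fintype.card G * ∑ g, φ g * starRingEnd ℂ (∑ x, φ (x * g * x⁻¹)) : ℂ) =
      (∑ g, ‖∑ x, φ (x * g * x⁻¹)‖ ^ 2 : ℝ) := by
  have conj_invariant (y g : G) :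
      ∑ x, φ (x * (y * g * y⁻¹) * x⁻¹) = ∑ x, φ (x * g * x⁻¹) :=
    Fintype.sum_equiv (Equiv.mulRight y) _ _ fun x => by simp [mul_assoc]
  have translate (y : G) : ∑ g, φ g * starRingEnd ℂ (∑ x, φ (x * g * x⁻¹)) =
      ∑ g, φ (y * g * y⁻¹) * starRingEnd ℂ (∑ x, φ (x * g * x⁻¹)) := by
    rw [← Equiv.sum_comp (MulAut.conj y).toEquiv]
    simp [MulAut.conj_apply, conj_invariant]
  calc _ = ∑ y : G, ∑ g, φ (y * g * y⁻¹) * starRingEnd ℂ (∑ x, φ (x * g * x⁻¹)) := by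
        simp_rw [← translate, Finset.sum_const, Finset.card_univ, nsmul_eq_mul]
    _ = _ := by
        rw [Finset.sum_comm]
        simp_rw [← Finset.sum_mul, RCLike.mul_conj]
        push_cast
        rfl

lemma IsUnitaryRep.card_mul_sq_sum_norm_inner_sq_le (hρ : IsUnitaryRep ρ) {b : V}
    (hb : ‖b‖ = 1) :
    Fintype.card G * (∑ g, ‖⟪b, ρ g b⟫_ℂ‖ ^ 2) ^ 2 ≤
      ∑ g, ‖∑ x, ρ (x * g * x⁻¹) b‖ ^ 2 := by
  have reindex : ∑ s : G, ∑ t, ⟪b, ρ (s⁻¹ * t) b⟫_ℂ * ⟪b, ρ (s * t⁻¹) b⟫_ℂ =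
      ∑ g, ⟪b, ρ g b⟫_ℂ * starRingEnd ℂ (∑ x, ⟪b, ρ (x * g * x⁻¹) b⟫_ℂ) := by
    have substitute (s : G) : ∑ t, ⟪b, ρ (s⁻¹ * t) b⟫_ℂ * ⟪b, ρ (s * t⁻¹) b⟫_ℂ =
        ∑ g, ⟪b, ρ g b⟫_ℂ * starRingEnd ℂ ⟪b, ρ (s * g * s⁻¹) b⟫_ℂ :=
      Fintype.sum_equiv (Equiv.mulLeft s⁻¹) _ _ fun t => by
        rw [Equiv.coe_mulLeft, inner_conj_symm, ← hρ.inner_map_inv]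
        simp
    simp_rw [substitute, map_sum, Finset.mul_sum]
    exact Finset.sum_comm
  calc Fintype.card G * (∑ g, ‖⟪b, ρ g b⟫_ℂ‖ ^ 2) ^ 2
      ≤ Fintype.card G *
          ‖∑ g, ⟪b, ρ g b⟫_ℂ * starRingEnd ℂ (∑ x, ⟪b, ρ (x * g * x⁻¹) b⟫_ℂ)‖ := by
        rw [← reindex]
        gcongr
        exact hρ.sq_sum_norm_inner_sq_le id hb
    _ = ∑ g, ‖∑ x, ⟪b, ρ (x * g * x⁻¹) b⟫_ℂ‖ ^ 2 := by
        rw [← Complex.norm_natCast, ← norm_mul, card_mul_sum_mul_conj_sum_conj, Complex.norm_real,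
          Real.norm_of_nonneg (by positivity)]
    _ ≤ ∑ g, ‖∑ x, ρ (x * g * x⁻¹) b‖ ^ 2 := by
        gcongr with g
        rw [← inner_sum]
        simpa only [hb, one_mul] using norm_inner_le_norm (𝕜 := ℂ) b _

end TensorSquare

section ConjugationCollisions

variable {G : Type*} [Group G]

lemma collisionCount_prodMk {S Y α : Type*} [Fintype Y] [Finite S] (f : Y → S → α) :
    collisionCount (fun p : Y × S => (p.1, f p.1 p.2)) = ∑ y, collisionCount (f y) := by
  simp only [collisionCount, ← Nat.card_sigma]
  exact Nat.card_congr
    { toFun := fun p => ⟨p.1.1.1, (p.1.1.2, p.1.2.2), by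
        obtain ⟨⟨⟨y, s⟩, y', t⟩, h⟩ := p
        obtain ⟨hy, hf⟩ := Prod.mk.inj h
        dsimp only at hy hf ⊢
        rwa [← hy] at hf⟩
      invFun := fun q => ⟨((q.1, q.2.1.1), (q.1, q.2.1.2)), Prod.ext rfl q.2.2⟩
      left_inv := by
        rintro ⟨⟨⟨y, s⟩, y', t⟩, h⟩
        obtain ⟨hy, -⟩ := Prod.mk.inj h
        dsimp only at hy
        subst hy
        rfl
      right_inv := fun _ => rfl }

lemma sum_collisionCount_conj [Fintype G] :
    ∑ y : G, collisionCount (fun x => x * y * x⁻¹) =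
      Fintype.card G ^ 2 * Nat.card (ConjClasses G) := by
  have commute_iff (y x x' : G) : x * y * x⁻¹ = x' * y * x'⁻¹ ↔ Commute (x⁻¹ * x') y := by
    rw [eq_mul_inv_iff_mul_eq, commute_iff_eq, ← mul_right_inj x⁻¹, eq_comm]
    simp [mul_assoc]
  have equiv : (Σ y : G, {p : G × G // p.1 * y * p.1⁻¹ = p.2 * y * p.2⁻¹}) ≃
      G × {p : G × G // Commute p.1 p.2} :=
    { toFun := fun q => (q.2.1.1, ⟨(q.2.1.1⁻¹ * q.2.1.2, q.1), (commute_iff _ _ _).mp q.2.2⟩)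
      invFun := fun r => ⟨r.2.1.2, (r.1, r.1 * r.2.1.1), (commute_iff _ _ _).mpr (by
        simpa using r.2.2)⟩
      left_inv := fun q => by simp
      right_inv := fun r => by simp }
  simp only [collisionCount, ← Nat.card_sigma]
  rw [Nat.card_congr equiv, Nat.card_prod, card_comm_eq_card_conjClasses_mul_card,
    Nat.card_eq_fintype_card]
  ring

lemma collisionCount_mul_inv_inv_mul [Fintype G] :
    collisionCount (fun p : G × G => (p.1 * p.2⁻¹, p.1⁻¹ * p.2)) =
      Fintype.card G ^ 2 * Nat.card (ConjClasses G) := by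
  let e : G × G ≃ G × G :=
    { toFun := fun p => (p.1 * p.2⁻¹, p.1⁻¹)
      invFun := fun q => (q.2⁻¹, q.1⁻¹ * q.2⁻¹)
      left_inv := fun p => by simp
      right_inv := fun q => by simp }
  have factor : (fun p : G × G => (p.1 * p.2⁻¹, p.1⁻¹ * p.2)) =
      Prod.map id (·⁻¹) ∘ (fun q : G × G => (q.1, q.2 * q.1 * q.2⁻¹)) ∘ e := by
    ext p <;> simp [e]
  rw [factor, collisionCount_comp_injective (Function.injective_id.prodMap inv_injective),
    collisionCount_comp_equiv, collisionCount_prodMk fun y x : G => x * y * x⁻¹,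
    sum_collisionCount_conj]

lemma card_conjClasses_prod [Finite G] :
    Nat.card (ConjClasses (G × G)) = Nat.card (ConjClasses G) ^ 2 := by
  have h := commProb_prod G G
  rw [commProb_def', commProb_def', Nat.card_prod] at h
  have card_pos : (0 : ℚ) < Nat.card G := by exact_mod_cast Nat.card_pos
  have : (Nat.card (ConjClasses (G × G)) : ℚ) = Nat.card (ConjClasses G) ^ 2 := by
    push_cast at h
    field_simp at h
    linarith
  exact_mod_cast this

end ConjugationCollisions

section SwapInvolutions

variable {G : Type*} [Group G]

/-- The element `((α, α⁻¹), 1)` of `classM G`. -/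
def swapInvolution (α : G) : wreathZ2 G := ⟨(α, α⁻¹), Multiplicative.ofAdd 1⟩

lemma swapHom_ofAdd_one_apply (a b : G) : swapHom G (Multiplicative.ofAdd 1) (a, b) = (b, a) :=
  congrArg (fun f : MulAut (G × G) => f (a, b)) (pow_one (swapAut G))

lemma swapInvolution_mul (α β : G) :
    swapInvolution α * swapInvolution β = SemidirectProduct.inl (α * β⁻¹, α⁻¹ * β) := by
  have one_add_one : (1 : ZMod 2) + 1 = 0 := by decide
  refine SemidirectProduct.ext ?_ ?_
  · simp [swapInvolution, swapHom_ofAdd_one_apply]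
  · simp [swapInvolution, ← ofAdd_add, one_add_one]

lemma swapInvolution_mul_self (α : G) : swapInvolution α * swapInvolution α = 1 := by
  simp only [swapInvolution_mul, mul_inv_cancel, inv_mul_cancel, Prod.mk_one_one, map_one]

lemma swapInvolution_injective : Function.Injective (swapInvolution (G := G)) :=
  fun _ _ h => congrArg (fun x : wreathZ2 G => x.left.1) h

variable [Fintype G]

lemma sum_classM {M : Type*} [AddCommMonoid M] (f : wreathZ2 G → M) :
    ∑ m ∈ classM G, f m = ∑ α, f (swapInvolution α) := by
  classical exact Finset.sum_image swapInvolution_injective.injOn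

lemma card_classM : (classM G).card = Fintype.card G := by
  classical exact Finset.card_image_of_injective _ swapInvolution_injective

end SwapInvolutions

section MatrixCoefficientBounds

variable {G H : Type*} [Group G] [Fintype G] [Group H]

lemma IsUnitaryRep.pow_four_sum_norm_inner_swapInvolution_sq_le {V : Type*}
    [NormedAddCommGroup V] [InnerProductSpace ℂ V] {ρ : Representation ℂ H V}
    (hρ : IsUnitaryRep ρ) (θ : wreathZ2 G →* H) {b : V} (hb : ‖b‖ = 1) :
    (∑ α, ‖⟪b, ρ (θ (swapInvolution α)) b⟫_ℂ‖ ^ 2) ^ 4 ≤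
      Fintype.card G ^ 2 * Nat.card (ConjClasses G) *
        ∑ l : G × G, ‖⟪b, ρ (θ (SemidirectProduct.inl l)) b⟫_ℂ‖ ^ 2 := by
  set F : G × G → ℝ := fun l => ‖⟪b, ρ (θ (SemidirectProduct.inl l)) b⟫_ℂ‖ ^ 2
  have F_le_one (l : G × G) : F l ≤ 1 :=
    pow_le_one₀ (norm_nonneg _) (hρ.norm_inner_map_le_one _ hb)
  have inv_eq (α : G) : (θ (swapInvolution α))⁻¹ = θ (swapInvolution α) := by
    rw [inv_eq_iff_mul_eq_one, ← map_mul, swapInvolution_mul_self, map_one]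
  have sq_le : (∑ α, ‖⟪b, ρ (θ (swapInvolution α)) b⟫_ℂ‖ ^ 2) ^ 2 ≤
      ∑ p : G × G, F (p.1 * p.2⁻¹, p.1⁻¹ * p.2) := by
    simpa only [inv_eq, ← map_mul θ, swapInvolution_mul, Fintype.sum_prod_type] using
      hρ.sq_sum_norm_inner_sq_le_of_inv_eq inv_eq hb
  calc (∑ α, ‖⟪b, ρ (θ (swapInvolution α)) b⟫_ℂ‖ ^ 2) ^ 4
      = ((∑ α, ‖⟪b, ρ (θ (swapInvolution α)) b⟫_ℂ‖ ^ 2) ^ 2) ^ 2 := by ring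
    _ ≤ (∑ p : G × G, F (p.1 * p.2⁻¹, p.1⁻¹ * p.2)) ^ 2 := by gcongr
    _ ≤ _ := sq_sum_comp_le_collisionCount_mul _ (fun _ => sq_nonneg _) F_le_one
    _ = _ := by rw [collisionCount_mul_inv_inv_mul]; push_cast; rfl

variable [Fintype H] {T : Type*} [Fintype T] {V : T → Type*} [∀ i, NormedAddCommGroup (V i)]
  [∀ i, InnerProductSpace ℂ (V i)] [∀ i, FiniteDimensional ℂ (V i)]
  {ρ : ∀ i, Representation ℂ H (V i)} {ι : T → Type*} [∀ i, Fintype (ι i)]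

lemma IsInequivalentFamily.sq_plancherelMean_sum_norm_inner_sq_le (hρ : IsInequivalentFamily ρ)
    (B : ∀ i, OrthonormalBasis (ι i) ℂ (V i)) {θ : G →* H} (hθ : Function.Injective θ) :
    plancherelMean H V (fun j =>
        ∑ g, ‖⟪B j.1 j.2, ρ j.1 (θ g) (B j.1 j.2)⟫_ℂ‖ ^ 2) ^ 2 ≤
      Fintype.card G * Nat.card (ConjClasses G) := by
  have card_pos : (0 : ℝ) < Fintype.card G := by exact_mod_cast Fintype.card_pos
  have bessel (g : G) : plancherelMean H V (fun j =>
      ‖∑ x, ρ j.1 (θ (x * g * x⁻¹)) (B j.1 j.2)‖ ^ 2) ≤ collisionCount fun x => x * g * x⁻¹ := by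
    rw [← collisionCount_comp_injective hθ]
    exact hρ.plancherelMean_norm_sq_le B _
  refine le_of_mul_le_mul_left ?_ card_pos
  calc Fintype.card G * plancherelMean H V (fun j =>
        ∑ g, ‖⟪B j.1 j.2, ρ j.1 (θ g) (B j.1 j.2)⟫_ℂ‖ ^ 2) ^ 2
      ≤ plancherelMean H V fun j =>
          Fintype.card G * (∑ g, ‖⟪B j.1 j.2, ρ j.1 (θ g) (B j.1 j.2)⟫_ℂ‖ ^ 2) ^ 2 := by
        rw [plancherelMean_const_mul]
        gcongr
        exact hρ.sq_plancherelMean_le B _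
    _ ≤ plancherelMean H V fun j => ∑ g, ‖∑ x, ρ j.1 (θ (x * g * x⁻¹)) (B j.1 j.2)‖ ^ 2 :=
        plancherelMean_mono fun j => IsUnitaryRep.card_mul_sq_sum_norm_inner_sq_le
          (ρ := (ρ j.1).comp θ) (fun g => hρ.isUnitaryRep j.1 (θ g)) ((B j.1).orthonormal.1 j.2)
    _ ≤ ∑ g : G, (collisionCount fun x => x * g * x⁻¹ : ℝ) := by
        rw [plancherelMean_sum]
        exact Finset.sum_le_sum fun g _ => bessel g
    _ = Fintype.card G * (Fintype.card G * Nat.card (ConjClasses G)) := by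
        rw [← Nat.cast_sum, sum_collisionCount_conj]
        push_cast
        ring

lemma IsInequivalentFamily.plancherelMean_sum_prod_norm_inner_sq_le
    (hρ : IsInequivalentFamily ρ) (B : ∀ i, OrthonormalBasis (ι i) ℂ (V i)) {θ : G × G →* H}
    (hθ : Function.Injective θ) :
    plancherelMean H V (fun j =>
        ∑ l, ‖⟪B j.1 j.2, ρ j.1 (θ l) (B j.1 j.2)⟫_ℂ‖ ^ 2) ≤
      Fintype.card G * Nat.card (ConjClasses G) := by
  refine le_of_sq_le_sq ?_ (by positivity)
  refine (hρ.sq_plancherelMean_sum_norm_inner_sq_le B hθ).trans_eq ?_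
  rw [card_conjClasses_prod, Fintype.card_prod]
  push_cast
  ring

lemma IsInequivalentFamily.pow_four_plancherelMean_swapInvolution_le
    (hρ : IsInequivalentFamily ρ) (B : ∀ i, OrthonormalBasis (ι i) ℂ (V i))
    {θ : wreathZ2 G →* H} (hθ : Function.Injective θ) :
    plancherelMean H V (fun j =>
        ∑ α, ‖⟪B j.1 j.2, ρ j.1 (θ (swapInvolution α)) (B j.1 j.2)⟫_ℂ‖ ^ 2) ^ 4 ≤
      Fintype.card G ^ 3 * Nat.card (ConjClasses G) ^ 2 := by
  set X : (Σ i, ι i) → ℝ := fun j =>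
    ∑ α, ‖⟪B j.1 j.2, ρ j.1 (θ (swapInvolution α)) (B j.1 j.2)⟫_ℂ‖ ^ 2
  calc plancherelMean H V X ^ 4 = (plancherelMean H V X ^ 2) ^ 2 := by ring
    _ ≤ plancherelMean H V (fun j => X j ^ 2) ^ 2 := by
        gcongr
        exact hρ.sq_plancherelMean_le B X
    _ ≤ plancherelMean H V fun j => (X j ^ 2) ^ 2 := hρ.sq_plancherelMean_le B _
    _ ≤ plancherelMean H V fun j => Fintype.card G ^ 2 * Nat.card (ConjClasses G) *
          ∑ l, ‖⟪B j.1 j.2, ρ j.1 (θ (SemidirectProduct.inl l)) (B j.1 j.2)⟫_ℂ‖ ^ 2 :=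
        plancherelMean_mono fun j => by
          rw [← pow_mul]
          exact (hρ.isUnitaryRep j.1).pow_four_sum_norm_inner_swapInvolution_sq_le θ
            ((B j.1).orthonormal.1 j.2)
    _ ≤ Fintype.card G ^ 2 * Nat.card (ConjClasses G) *
          (Fintype.card G * Nat.card (ConjClasses G)) := by
        rw [plancherelMean_const_mul]
        gcongr
        exact hρ.plancherelMean_sum_prod_norm_inner_sq_le B (θ := θ.comp SemidirectProduct.inl)
          (hθ.comp SemidirectProduct.inl_injective)
    _ = _ := by ring

lemma IsInequivalentFamily.pow_eight_plancherelMean_swapInvolution_le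
    (hρ : IsInequivalentFamily ρ) (B : ∀ i, OrthonormalBasis (ι i) ℂ (V i))
    {θ : wreathZ2 G →* H} (hθ : Function.Injective θ) :
    plancherelMean H V (fun j =>
        ∑ α, ‖⟪B j.1 j.2, ρ j.1 (θ (swapInvolution α)) (B j.1 j.2)⟫_ℂ‖) ^ 8 ≤
      Fintype.card G ^ 7 * Nat.card (ConjClasses G) ^ 2 := by
  set Y : (Σ i, ι i) → ℝ := fun j =>
    ∑ α, ‖⟪B j.1 j.2, ρ j.1 (θ (swapInvolution α)) (B j.1 j.2)⟫_ℂ‖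
  have sq_le : plancherelMean H V Y ^ 2 ≤ Fintype.card G * plancherelMean H V fun j =>
      ∑ α, ‖⟪B j.1 j.2, ρ j.1 (θ (swapInvolution α)) (B j.1 j.2)⟫_ℂ‖ ^ 2 := by
    rw [← plancherelMean_const_mul]
    exact (hρ.sq_plancherelMean_le B Y).trans
      (plancherelMean_mono fun j => sq_sum_le_card_mul_sum_sq)
  calc plancherelMean H V Y ^ 8 = (plancherelMean H V Y ^ 2) ^ 4 := by ring
    _ ≤ _ := pow_le_pow_left₀ (sq_nonneg _) sq_le 4
    _ ≤ Fintype.card G ^ 4 * (Fintype.card G ^ 3 * Nat.card (ConjClasses G) ^ 2) := by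
        rw [mul_pow]
        gcongr
        exact hρ.pow_four_plancherelMean_swapInvolution_le B hθ
    _ = _ := by ring

lemma IsInequivalentFamily.plancherelMean_swapInvolution_le
    (hρ : IsInequivalentFamily ρ) (B : ∀ i, OrthonormalBasis (ι i) ℂ (V i))
    {θ : wreathZ2 G →* H} (hθ : Function.Injective θ) :
    plancherelMean H V (fun j =>
        ∑ α, ‖⟪B j.1 j.2, ρ j.1 (θ (swapInvolution α)) (B j.1 j.2)⟫_ℂ‖) ≤
      Fintype.card G *
        ((Nat.card (ConjClasses G) ^ 2 / Fintype.card G : ℝ) ^ (1 / 8 : ℝ)) := by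
  have card_ne_zero : (Fintype.card G : ℝ) ≠ 0 := by exact_mod_cast Fintype.card_ne_zero
  refine le_of_pow_le_pow_left₀ (n := 8) (by norm_num) (by positivity) ?_
  refine (hρ.pow_eight_plancherelMean_swapInvolution_le B hθ).trans_eq ?_
  have exponent : (1 / 8 : ℝ) * (8 : ℕ) = 1 := by norm_num
  rw [mul_pow, ← Real.rpow_mul_natCast (by positivity), exponent, Real.rpow_one]
  field_simp

end MatrixCoefficientBounds

section InvolutionProjection

variable {G V : Type*} [Group G] {k : ℕ}

/-- The homomorphism `g ↦ onI g I`. -/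
def onIHom (I : Finset (Fin k)) : G →* (Fin k → G) where
  toFun g := onI g I
  map_one' := funext fun i => by simp [onI]
  map_mul' a b := funext fun i => by by_cases hi : i ∈ I <;> simp [onI, hi]

lemma onIHom_apply (I : Finset (Fin k)) (g : G) : onIHom I g = onI g I := rfl

lemma onIHom_injective {I : Finset (Fin k)} (hI : I ≠ ∅) :
    Function.Injective (onIHom (G := G) I) := by
  obtain ⟨i, hi⟩ := Finset.nonempty_iff_ne_empty.mpr hI
  intro a b h
  simpa [onIHom, onI, hi] using congrFun h i

lemma onI_empty (m : G) : onI m (∅ : Finset (Fin k)) = 1 := by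
  funext i
  simp [onI]

lemma onI_mul_onI {m : G} (hm : m * m = 1) (I J : Finset (Fin k)) :
    onI m I * onI m J = onI m (symmDiff I J) := by
  funext i
  by_cases hI : i ∈ I <;> by_cases hJ : i ∈ J <;> simp [onI, hI, hJ, Finset.mem_symmDiff, hm]

section Module

variable [AddCommGroup V] [Module ℂ V] (ρ : Representation ℂ (Fin k → G) V)

lemma two_pow_smul_invProj_apply (m : G) (v : V) :
    (2 : ℂ) ^ k • invProj ρ m v = ∑ I, ρ (onI m I) v := by
  rw [invProj, LinearMap.smul_apply, smul_inv_smul₀ (pow_ne_zero _ two_ne_zero),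
    LinearMap.sum_apply]

variable {m : G} (hm : m * m = 1)
include hm

lemma map_onI_invProj (I : Finset (Fin k)) (v : V) :
    ρ (onI m I) (invProj ρ m v) = invProj ρ m v := by
  refine smul_right_injective V (pow_ne_zero k (two_ne_zero (α := ℂ))) ?_
  dsimp only
  rw [← map_smul, two_pow_smul_invProj_apply, map_sum]
  refine Fintype.sum_equiv (symmDiff_right_involutive I).toPerm _ _ fun J => ?_
  rw [← Module.End.mul_apply, ← map_mul, onI_mul_onI hm]
  rfl

lemma invProj_invProj (v : V) : invProj ρ m (invProj ρ m v) = invProj ρ m v := by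
  refine smul_right_injective V (pow_ne_zero k (two_ne_zero (α := ℂ))) ?_
  simp [two_pow_smul_invProj_apply, map_onI_invProj ρ hm, ← Nat.cast_smul_eq_nsmul ℂ]

end Module

variable [NormedAddCommGroup V] [InnerProductSpace ℂ V] {ρ : Representation ℂ (Fin k → G) V}
  {m : G}

lemma IsUnitaryRep.inner_invProj_self (hρ : IsUnitaryRep ρ) (hm : m * m = 1) (v : V) :
    ⟪v, invProj ρ m v⟫_ℂ = (‖invProj ρ m v‖ ^ 2 : ℝ) := by
  have inner_map (I : Finset (Fin k)) :
      ⟪ρ (onI m I) v, invProj ρ m v⟫_ℂ = ⟪v, invProj ρ m v⟫_ℂ := by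
    rw [← hρ (onI m I) v, map_onI_invProj ρ hm]
  have sum_inner_map : ⟪(2 : ℂ) ^ k • invProj ρ m v, invProj ρ m v⟫_ℂ =
      (2 : ℂ) ^ k * ⟪v, invProj ρ m v⟫_ℂ := by
    simp [two_pow_smul_invProj_apply, inner_map]
  rw [inner_smul_left, map_pow, Complex.conj_ofNat] at sum_inner_map
  rw [← mul_left_cancel₀ (pow_ne_zero k two_ne_zero) sum_inner_map, inner_self_eq_norm_sq_to_K]
  norm_cast

lemma IsUnitaryRep.two_pow_mul_norm_invProj_sq (hρ : IsUnitaryRep ρ) (hm : m * m = 1) (v : V) :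
    2 ^ k * ‖invProj ρ m v‖ ^ 2 = ∑ I, (⟪v, ρ (onI m I) v⟫_ℂ).re := by
  have h : ((2 ^ k * ‖invProj ρ m v‖ ^ 2 : ℝ) : ℂ) = ∑ I, ⟪v, ρ (onI m I) v⟫_ℂ := by
    rw [← inner_sum, ← two_pow_smul_invProj_apply, inner_smul_right, hρ.inner_invProj_self hm]
    push_cast
    rfl
  rw [← Complex.re_sum, ← h, Complex.ofReal_re]

lemma IsUnitaryRep.sum_norm_invProj_sq [FiniteDimensional ℂ V] {ι : Type*} [Fintype ι]
    (hρ : IsUnitaryRep ρ) (hm : m * m = 1) (B : OrthonormalBasis ι ℂ V) :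
    ∑ x, ‖invProj ρ m (B x)‖ ^ 2 = Module.finrank ℂ (LinearMap.range (invProj ρ m)) := by
  have isProj : LinearMap.IsProj (LinearMap.range (invProj ρ m)) (invProj ρ m) :=
    ⟨LinearMap.mem_range_self _, by rintro _ ⟨v, rfl⟩; exact invProj_invProj ρ hm v⟩
  have trace_eq := isProj.trace
  simp only [LinearMap.trace_eq_sum_inner _ B, hρ.inner_invProj_self hm] at trace_eq
  exact_mod_cast trace_eq

lemma IsUnitaryRep.abs_two_pow_mul_norm_invProj_sq_sub_one_le (hρ : IsUnitaryRep ρ)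
    (hm : m * m = 1) {v : V} (hv : ‖v‖ = 1) :
    |2 ^ k * ‖invProj ρ m v‖ ^ 2 - 1| ≤
      ∑ I ∈ Finset.univ.erase ∅, ‖⟪v, ρ (onI m I) v⟫_ℂ‖ := by
  have empty_term : (⟪v, ρ (onI m ∅) v⟫_ℂ).re = 1 := by
    rw [onI_empty, map_one, Module.End.one_apply, inner_self_eq_norm_sq_to_K, hv]
    norm_num
  rw [hρ.two_pow_mul_norm_invProj_sq hm, ← Finset.add_sum_erase _ _ (Finset.mem_univ ∅),
    empty_term, add_sub_cancel_left]
  exact (Finset.abs_sum_le_sum_abs _ _).trans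
    (Finset.sum_le_sum fun I _ => Complex.abs_re_le_norm _)

end InvolutionProjection

section FourierSampling

lemma sum_abs_sub_le_two_mul_sum_abs_sub {ι : Type*} [Fintype ι] {a : ι → ℝ} {t : ℝ}
    (ht : ∑ x, a x = Fintype.card ι * t) (s : ℝ) : ∑ x, |a x - t| ≤ 2 * ∑ x, |a x - s| := by
  have sum_sub : ∑ x, (a x - s) = ∑ _x : ι, (t - s) := by
    simp only [Finset.sum_sub_distrib, ht, Finset.sum_const, Finset.card_univ, nsmul_eq_mul]
  have sum_abs_mean_sub_le : ∑ _x : ι, |t - s| ≤ ∑ x, |a x - s| := by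
    rw [Finset.sum_const, nsmul_eq_mul, ← Nat.abs_cast, ← abs_mul, ← nsmul_eq_mul,
      ← Finset.sum_const, ← sum_sub]
    exact Finset.abs_sum_le_sum_abs _ _
  calc ∑ x, |a x - t| ≤ ∑ x, (|a x - s| + |t - s|) :=
        Finset.sum_le_sum fun x _ => (abs_sub_le _ s _).trans_eq (by rw [abs_sub_comm s t])
    _ ≤ 2 * ∑ x, |a x - s| := by
        rw [Finset.sum_add_distrib, two_mul]
        gcongr

/-- The probability `H_m(i)` of observing `ρ = ρ_i` under weak Fourier sampling. -/
def samplingProb {G V : Type*} [Group G] [Fintype G] [AddCommGroup V] [Module ℂ V] {k : ℕ}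
    (ρ : Representation ℂ (Fin k → G) V) (m : G) : ℝ :=
  2 ^ k * Module.finrank ℂ V * Module.finrank ℂ (LinearMap.range (invProj ρ m)) /
    Fintype.card G ^ k

variable {G : Type*} [Group G] {k : ℕ}

/-- The `ℓ¹` distance `D_m(i)` from the uniform distribution of the distribution `H_m(i, ·)` on the
basis `B` of the space of `ρ = ρ_i`. -/
def basisDeviation {V ι : Type*} [NormedAddCommGroup V] [InnerProductSpace ℂ V] [Fintype ι]
    (ρ : Representation ℂ (Fin k → G) V) (m : G) (B : OrthonormalBasis ι ℂ V) : ℝ :=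
  ∑ x, |‖invProj ρ m (B x)‖ ^ 2 / Module.finrank ℂ (LinearMap.range (invProj ρ m)) -
    1 / Module.finrank ℂ V|

variable [Fintype G]

lemma samplingProb_mul_basisDeviation_le_sum_abs {V ι : Type*} [NormedAddCommGroup V]
    [InnerProductSpace ℂ V] [FiniteDimensional ℂ V] [Fintype ι]
    (ρ : Representation ℂ (Fin k → G) V) (m : G) (B : OrthonormalBasis ι ℂ V) :
    samplingProb ρ m * basisDeviation ρ m B ≤ Module.finrank ℂ V / Fintype.card G ^ k *
      ∑ x, |2 ^ k * ‖invProj ρ m (B x)‖ ^ 2 -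
        2 ^ k * Module.finrank ℂ (LinearMap.range (invProj ρ m)) / Module.finrank ℂ V| := by
  have rank_le := LinearMap.finrank_range_le (invProj ρ m)
  unfold samplingProb basisDeviation
  generalize Module.finrank ℂ (LinearMap.range (invProj ρ m)) = r at *
  rcases r.eq_zero_or_pos with rfl | r_pos
  · simp only [Nat.cast_zero, mul_zero, zero_div, zero_mul]
    positivity
  have finrank_pos := r_pos.trans_le rank_le
  rw [Finset.mul_sum, Finset.mul_sum]
  refine Finset.sum_le_sum fun x _ => le_of_eq ?_
  have scale : 2 ^ k * ‖invProj ρ m (B x)‖ ^ 2 - 2 ^ k * r / Module.finrank ℂ V =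
      2 ^ k * r * (‖invProj ρ m (B x)‖ ^ 2 / r - 1 / Module.finrank ℂ V) := by
    field_simp
  rw [scale, abs_mul, abs_of_nonneg (by positivity : (0 : ℝ) ≤ 2 ^ k * r)]
  ring

lemma IsUnitaryRep.samplingProb_mul_basisDeviation_le {V ι : Type*} [NormedAddCommGroup V]
    [InnerProductSpace ℂ V] [FiniteDimensional ℂ V] [Fintype ι]
    {ρ : Representation ℂ (Fin k → G) V} (hρ : IsUnitaryRep ρ) {m : G} (hm : m * m = 1)
    (B : OrthonormalBasis ι ℂ V) :
    samplingProb ρ m * basisDeviation ρ m B ≤ Module.finrank ℂ V / Fintype.card G ^ k *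
      (2 * ∑ x, ∑ I ∈ Finset.univ.erase ∅, ‖⟪B x, ρ (onI m I) (B x)⟫_ℂ‖) := by
  have mean_eq : ∑ x, 2 ^ k * ‖invProj ρ m (B x)‖ ^ 2 = Fintype.card ι *
      (2 ^ k * Module.finrank ℂ (LinearMap.range (invProj ρ m)) / Module.finrank ℂ V : ℝ) := by
    rw [← Finset.mul_sum, hρ.sum_norm_invProj_sq hm, ← Module.finrank_eq_card_basis B.toBasis,
      mul_div_cancel_of_imp']
    intro h
    have rank_le := LinearMap.finrank_range_le (invProj ρ m)
    rw [Nat.cast_eq_zero] at h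
    simp [Nat.le_zero.mp (h ▸ rank_le)]
  refine (samplingProb_mul_basisDeviation_le_sum_abs ρ m B).trans ?_
  gcongr
  refine (sum_abs_sub_le_two_mul_sum_abs_sub mean_eq 1).trans ?_
  gcongr with x
  exact hρ.abs_two_pow_mul_norm_invProj_sq_sub_one_le hm (B.orthonormal.1 x)

variable {T : Type*} [Fintype T] {V : T → Type*} [∀ i, NormedAddCommGroup (V i)]
  [∀ i, InnerProductSpace ℂ (V i)] [∀ i, FiniteDimensional ℂ (V i)] {ι : T → Type*}
  [∀ i, Fintype (ι i)]

lemma sum_samplingProb_mul_basisDeviation_le {ρ : ∀ i, Representation ℂ (Fin k → G) (V i)}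
    (hρ : ∀ i, IsUnitaryRep (ρ i)) {m : G} (hm : m * m = 1)
    (B : ∀ i, OrthonormalBasis (ι i) ℂ (V i)) :
    ∑ i, samplingProb (ρ i) m * basisDeviation (ρ i) m (B i) ≤
      2 * ∑ I ∈ Finset.univ.erase ∅, plancherelMean (Fin k → G) V fun j =>
        ‖⟪B j.1 j.2, ρ j.1 (onI m I) (B j.1 j.2)⟫_ℂ‖ := by
  rw [← plancherelMean_sum, plancherelMean_eq_sum, Finset.mul_sum]
  refine Finset.sum_le_sum fun i _ => ((hρ i).samplingProb_mul_basisDeviation_le hm (B i)).trans ?_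
  rw [mul_left_comm, Fintype.card_fun, Fintype.card_fin, Nat.cast_pow]

end FourierSampling

section Concentration

lemma mul_sum_filter_lt_le_sum_mul {T : Type*} (s : Finset T) {p D : T → ℝ} (hp : ∀ i, 0 ≤ p i)
    (hD : ∀ i, 0 ≤ D i) (ε : ℝ) [DecidablePred fun i => ε < D i] :
    ε * ∑ i ∈ s with ε < D i, p i ≤ ∑ i ∈ s, p i * D i := by
  rw [Finset.mul_sum]
  refine (Finset.sum_le_sum fun i hi => ?_).trans (Finset.sum_le_sum_of_subset_of_nonneg
    (Finset.filter_subset _ s) fun i _ _ => mul_nonneg (hp i) (hD i))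
  rw [mul_comm ε]
  exact mul_le_mul_of_nonneg_left (Finset.mem_filter.mp hi).2.le (hp i)

variable {G T : Type*} [Group G] [Fintype G] {k : ℕ} [Fintype T] {V : T → Type*}
  [∀ i, NormedAddCommGroup (V i)] [∀ i, InnerProductSpace ℂ (V i)]
  [∀ i, FiniteDimensional ℂ (V i)] {ρ : ∀ i, Representation ℂ (Fin k → wreathZ2 G) (V i)}
  {ι : T → Type*} [∀ i, Fintype (ι i)]

lemma IsInequivalentFamily.sum_classM_samplingProb_mul_basisDeviation_le
    (hρ : IsInequivalentFamily ρ) (B : ∀ i, OrthonormalBasis (ι i) ℂ (V i)) :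
    ∑ m ∈ classM G, ∑ i, samplingProb (ρ i) m * basisDeviation (ρ i) m (B i) ≤
      2 * 2 ^ k * (Fintype.card G *
        ((Nat.card (ConjClasses G) ^ 2 / Fintype.card G : ℝ) ^ (1 / 8 : ℝ))) := by
  set δ : ℝ := (Nat.card (ConjClasses G) ^ 2 / Fintype.card G : ℝ) ^ (1 / 8 : ℝ)
  have sum_onI_le (I : Finset (Fin k)) (hI : I ≠ ∅) :
      ∑ α, plancherelMean (Fin k → wreathZ2 G) V (fun j =>
        ‖⟪B j.1 j.2, ρ j.1 (onI (swapInvolution α) I) (B j.1 j.2)⟫_ℂ‖) ≤ Fintype.card G * δ := by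
    rw [← plancherelMean_sum]
    simpa only [onIHom_apply] using
      hρ.plancherelMean_swapInvolution_le B (onIHom_injective hI)
  have card_subsets : (Fintype.card (Finset (Fin k)) : ℝ) = 2 ^ k := by simp
  rw [sum_classM]
  calc ∑ α, ∑ i, samplingProb (ρ i) (swapInvolution α) *
          basisDeviation (ρ i) (swapInvolution α) (B i)
      ≤ ∑ α, 2 * ∑ I ∈ Finset.univ.erase ∅, plancherelMean (Fin k → wreathZ2 G) V fun j =>
          ‖⟪B j.1 j.2, ρ j.1 (onI (swapInvolution α) I) (B j.1 j.2)⟫_ℂ‖ :=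
        Finset.sum_le_sum fun α _ =>
          sum_samplingProb_mul_basisDeviation_le hρ.isUnitaryRep (swapInvolution_mul_self α) B
    _ ≤ 2 * ∑ _I ∈ Finset.univ.erase (∅ : Finset (Fin k)), Fintype.card G * δ := by
        rw [← Finset.mul_sum, Finset.sum_comm]
        gcongr with I hI
        exact sum_onI_le I (Finset.ne_of_mem_erase hI)
    _ ≤ 2 * ∑ _I : Finset (Fin k), Fintype.card G * δ := by
        gcongr
        exact Finset.erase_subset _ _
    _ = 2 * 2 ^ k * (Fintype.card G * δ) := by
        rw [Finset.sum_const, Finset.card_univ, nsmul_eq_mul, card_subsets, mul_assoc]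

open Classical in
theorem IsInequivalentFamily.mean_samplingProb_lt_basisDeviation_le
    (hρ : IsInequivalentFamily ρ) (B : ∀ i, OrthonormalBasis (ι i) ℂ (V i)) {ε : ℝ} (hε : 0 < ε) :
    1 / ((classM G).card : ℝ) * ∑ m ∈ classM G,
        ∑ i with ε < basisDeviation (ρ i) m (B i), samplingProb (ρ i) m ≤
      ε⁻¹ * (2 * 2 ^ k *
        ((Nat.card (ConjClasses G) ^ 2 / Fintype.card G : ℝ) ^ (1 / 8 : ℝ))) := by
  have card_pos : (0 : ℝ) < Fintype.card G := by exact_mod_cast Fintype.card_pos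
  have markov : ε * ∑ m ∈ classM G,
      ∑ i with ε < basisDeviation (ρ i) m (B i), samplingProb (ρ i) m ≤
        ∑ m ∈ classM G, ∑ i, samplingProb (ρ i) m * basisDeviation (ρ i) m (B i) := by
    rw [Finset.mul_sum]
    refine Finset.sum_le_sum fun m _ => mul_sum_filter_lt_le_sum_mul _ (fun i => ?_) (fun i => ?_) ε
    · unfold samplingProb
      positivity
    · exact Finset.sum_nonneg fun x _ => abs_nonneg _
  have bound := markov.trans (hρ.sum_classM_samplingProb_mul_basisDeviation_le B)
  rw [← le_inv_mul_iff₀ hε] at bound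
  rw [card_classM, one_div, inv_mul_le_iff₀ card_pos]
  exact bound.trans_eq (by ring)

end Concentration

section SymmetricGroup

open Equiv (Perm)

lemma card_conjClasses_perm_le (n : ℕ) : Nat.card (ConjClasses (Perm (Fin n))) ≤ 2 ^ n := by
  let cycleType : ConjClasses (Perm (Fin n)) → Nat.Partition (Fintype.card (Fin n)) :=
    Quotient.lift Perm.partition fun _ _ => Perm.partition_eq_of_isConj.mp
  have cycleType_injective : Function.Injective cycleType := by
    rintro ⟨σ⟩ ⟨τ⟩ h
    exact Quotient.sound (Perm.partition_eq_of_isConj.mpr h)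
  calc Nat.card (ConjClasses (Perm (Fin n)))
      ≤ Nat.card (Nat.Partition (Fintype.card (Fin n))) :=
        Nat.card_le_card_of_injective cycleType cycleType_injective
    _ ≤ Nat.card (Composition n) := by
        rw [Fintype.card_fin]
        exact Nat.card_le_card_of_surjective _ Nat.Partition.ofComposition_surj
    _ = 2 ^ (n - 1) := by rw [Nat.card_eq_fintype_card, composition_card]
    _ ≤ 2 ^ n := Nat.pow_le_pow_right two_pos (Nat.sub_le n 1)

lemma div_three_pow_le_factorial (n : ℕ) : (n / 3 : ℝ) ^ n ≤ n.factorial := by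
  have exp_le : Real.exp n ≤ 3 ^ n := by
    rw [← Real.exp_one_pow]
    gcongr
    exact Real.exp_one_lt_three.le
  rw [div_pow, div_le_iff₀ (by positivity), ← div_le_iff₀' (by positivity)]
  exact (Real.pow_div_factorial_le_exp n n.cast_nonneg n).trans exp_le

lemma card_conjClasses_perm_sq_div_card_le {n : ℕ} (hn : 128 ≤ n) :
    (Nat.card (ConjClasses (Perm (Fin n))) ^ 2 / Fintype.card (Perm (Fin n)) : ℝ) ≤
      (n : ℝ) ^ (-(n / 4) : ℝ) := by
  have n_ge : (128 : ℝ) ≤ n := by exact_mod_cast hn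
  set q : ℝ := (n : ℝ) ^ (1 / 4 : ℝ)
  have q_pow_four : q ^ 4 = n := by
    rw [← Real.rpow_mul_natCast n.cast_nonneg]
    norm_num
  have q_ge : 3 ≤ q := le_of_pow_le_pow_left₀ (n := 4) (by norm_num) (by positivity) (by
    rw [q_pow_four]
    linarith)
  have rpow_eq : (n : ℝ) ^ (-(n / 4) : ℝ) = (q ^ n)⁻¹ := by
    rw [← Real.rpow_mul_natCast n.cast_nonneg, ← Real.rpow_neg n.cast_nonneg]
    ring_nf
  have base_le : 4 * q ≤ n / 3 := by
    have : (3 : ℝ) ^ 3 ≤ q ^ 3 := by gcongr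
    rw [← q_pow_four]
    nlinarith
  rw [rpow_eq, Fintype.card_perm, Fintype.card_fin, div_le_iff₀ (by positivity),
    le_inv_mul_iff₀ (by positivity)]
  calc q ^ n * (Nat.card (ConjClasses (Perm (Fin n))) : ℝ) ^ 2 ≤ q ^ n * (2 ^ n) ^ 2 := by
        gcongr
        exact_mod_cast card_conjClasses_perm_le n
    _ = (4 * q) ^ n := by rw [← pow_mul, mul_comm n, pow_mul, ← mul_pow, mul_comm]; norm_num
    _ ≤ (n / 3) ^ n := by gcongr
    _ ≤ n.factorial := div_three_pow_le_factorial n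

lemma two_pow_le_rpow_of_le_mul_logb {x t : ℝ} (hx : 0 < x) {k : ℕ}
    (hk : (k : ℝ) ≤ t * Real.logb 2 x) : (2 : ℝ) ^ k ≤ x ^ t := by
  rw [← Real.rpow_natCast]
  calc (2 : ℝ) ^ (k : ℝ) ≤ 2 ^ (Real.logb 2 x * t) :=
        Real.rpow_le_rpow_of_exponent_le one_le_two (by linarith)
    _ = x ^ t := by rw [Real.rpow_mul two_pos.le, Real.rpow_logb two_pos (by norm_num) hx]

lemma samplingBound_perm_le {n k : ℕ} (hn : 128 ≤ n)
    (hk : (k : ℝ) ≤ 1 / 128 * n * Real.logb 2 n) :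
    ((n : ℝ) ^ (-(1 / 128 * n) : ℝ))⁻¹ * (2 * 2 ^ k *
      (Nat.card (ConjClasses (Perm (Fin n))) ^ 2 / Fintype.card (Perm (Fin n)) : ℝ) ^
        (1 / 8 : ℝ)) ≤ (n : ℝ) ^ (-(1 / 128 * n) : ℝ) := by
  have n_ge : (128 : ℝ) ≤ n := by exact_mod_cast hn
  have n_pos : (0 : ℝ) < n := by linarith
  set u : ℝ := (n : ℝ) ^ (1 / 128 * n : ℝ)
  have u_pos : 0 < u := by positivity
  have two_le : 2 ≤ u := by
    calc (2 : ℝ) ≤ (n : ℝ) ^ (1 : ℝ) := by rw [Real.rpow_one]; linarith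
      _ ≤ u := Real.rpow_le_rpow_of_exponent_le (by linarith) (by linarith)
  have two_pow_le : (2 : ℝ) ^ k ≤ u := two_pow_le_rpow_of_le_mul_logb n_pos hk
  have root_le : (Nat.card (ConjClasses (Perm (Fin n))) ^ 2 / Fintype.card (Perm (Fin n)) : ℝ) ^
      (1 / 8 : ℝ) ≤ (u ^ 4)⁻¹ := by
    calc _ ≤ ((n : ℝ) ^ (-(n / 4) : ℝ)) ^ (1 / 8 : ℝ) := by
          gcongr
          exact card_conjClasses_perm_sq_div_card_le hn
      _ = (u ^ 4)⁻¹ := by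
          rw [← Real.rpow_mul n_pos.le, ← Real.rpow_mul_natCast n_pos.le,
            ← Real.rpow_neg n_pos.le]
          ring_nf
  rw [Real.rpow_neg n_pos.le, inv_inv]
  calc _ ≤ u * (u * u * (u ^ 4)⁻¹) := by gcongr
    _ = u⁻¹ := by field_simp

end SymmetricGroup

open Classical in
theorem stmt16_general {n k : ℕ} (hn : 128 ≤ n) (hk : (k : ℝ) ≤ 1 / 128 * n * Real.logb 2 n)
    {T : Type*} [Fintype T] {V : T → Type*} [∀ i, NormedAddCommGroup (V i)]
    [∀ i, InnerProductSpace ℂ (V i)] [∀ i, FiniteDimensional ℂ (V i)]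
    {ρ : ∀ i, Representation ℂ (Fin k → wreathZ2 (Equiv.Perm (Fin n))) (V i)}
    (hρ : IsInequivalentFamily ρ) {ι : T → Type*} [∀ i, Fintype (ι i)]
    (B : ∀ i, OrthonormalBasis (ι i) ℂ (V i)) :
    1 / ((classM (Equiv.Perm (Fin n))).card : ℝ) * ∑ m ∈ classM (Equiv.Perm (Fin n)),
        ∑ i with basisDeviation (ρ i) m (B i) > (n : ℝ) ^ (-(1 / 128 * n) : ℝ),
          samplingProb (ρ i) m ≤
      (n : ℝ) ^ (-(1 / 128 * n) : ℝ) := by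
  have n_pos : (0 : ℝ) < n := by exact_mod_cast (by omega : 0 < n)
  exact (hρ.mean_samplingProb_lt_basisDeviation_le B (Real.rpow_pos_of_pos n_pos _)).trans
    (samplingBound_perm_le hn hk)

open Classical in
/-- Theorem 1 of the paper. For `K = (Sym(n) × Sym(n)) ⋊ Z₂` and the conjugacy
class `M` of involutions `((α,α⁻¹),1)`, if `k ≤ C n log₂ n` then, averaging over `m ∈ M`, the
probability (under weak Fourier sampling `H_m`) of observing a representation `ρ_i` whose
conditional distribution on any orthonormal basis is farther than `n^{-cn}` from uniform in
ℓ¹-distance is at most `n^{-cn}`. -/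
theorem stmt16 :
    ∃ C : ℝ, 0 < C ∧ ∃ c : ℝ, 0 < c ∧ ∃ N : ℕ, ∀ n : ℕ, N ≤ n →
    ∀ k : ℕ, 1 ≤ k → (k : ℝ) ≤ C * (n : ℝ) * Real.logb 2 (n : ℝ) →
    ∀ (T : Type) [Fintype T] (Vi : T → Type)
      [∀ i, NormedAddCommGroup (Vi i)] [∀ i, InnerProductSpace ℂ (Vi i)]
      [∀ i, FiniteDimensional ℂ (Vi i)]
      (ρi : ∀ i, Representation ℂ
        (Fin k → wreathZ2 (Equiv.Perm (Fin n))) (Vi i)),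
      IsCompleteFamily Vi ρi →
    ∀ (ι : T → Type) [∀ i, Fintype (ι i)] (B : ∀ i, OrthonormalBasis (ι i) ℂ (Vi i)),
      (1 / ((classM (Equiv.Perm (Fin n))).card : ℝ)) *
        ∑ m ∈ classM (Equiv.Perm (Fin n)),
          ∑ i ∈ Finset.univ.filter (fun i : T =>
              (∑ x : ι i,
                |‖invProj (ρi i) m (B i x)‖ ^ 2 /
                    (Module.finrank ℂ (LinearMap.range (invProj (ρi i) m)) : ℝ)
                  - 1 / (Module.finrank ℂ (Vi i) : ℝ)|)
                > (n : ℝ) ^ (-(c * (n : ℝ)))),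
            (2 : ℝ) ^ k * (Module.finrank ℂ (Vi i) : ℝ) *
                (Module.finrank ℂ (LinearMap.range (invProj (ρi i) m)) : ℝ) /
              (Fintype.card (wreathZ2 (Equiv.Perm (Fin n))) : ℝ) ^ k
        ≤ (n : ℝ) ^ (-(c * (n : ℝ))) := by
  refine ⟨1 / 128, by norm_num, 1 / 128, by norm_num, 128, ?_⟩
  intro n hn k _ hk T _ Vi _ _ _ ρi hρ ι _ B
  exact stmt16_general hn hk hρ.isInequivalentFamily B
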